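/- Fix β ∈ (0,1) and ε ∈ (0,1). For every κ > 0 there exist δ₀ ∈ (0,1) and n₀ ∈ ℤ⁺ such that for all n ≥ n₀, P(S_n^{δ₀,ε,n}/√n ≤ 0) ≤ ε + κ, where S^{δ,ε,n} is the controlled random walk defined in the context. -/

import Mathlib

open MeasureTheory Real Filter Set
open scoped BigOperators ENNReal Classical

noncomputable section

namespace Paper

/-- Standard Gaussian density `φ`. -/
def gpdf (u : ℝ) : ℝ := (Real.sqrt (2 * Real.pi))⁻¹ * Real.exp (-u ^ 2 / 2)

/-- Standard Gaussian CDF `Φ`. -/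
def gcdf (t : ℝ) : ℝ := ∫ u in Set.Iic t, gpdf u

/-- Inverse Gaussian CDF `Φ⁻¹`. -/
def gcdfInv : ℝ → ℝ := Function.invFun gcdf

/-- `α_δ(x) = ((1 - x(1-β)/δ)² - β²)/(1 - β²)`. -/
def alphaDelta (β δ x : ℝ) : ℝ := ((1 - x * ((1 - β) / δ)) ^ 2 - β ^ 2) / (1 - β ^ 2)

/-- The starting point `s(ε)`. -/
def sEps (β ε : ℝ) : ℝ :=
  if ε ≤ β / (1 + β) then -β * gcdfInv (ε * (1 + β) / (2 * β))
  else -gcdfInv ((ε * (1 + β) + (1 - β)) / 2)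

/-- Distribution of the increment of the controlled walk given current state `s`
(`sqn = √n`): `μ₁` when `s ≤ 0`, `μ₀` when `s > δ√n`, and the mixture
`μ_{δ,s/√n} = (1-α_δ(s/√n))μ₀ + α_δ(s/√n)μ₁` when `0 < s ≤ δ√n`. -/
def stepMeasure (μ0 μ1 : Measure ℝ) (β δ sqn s : ℝ) : Measure ℝ :=
  if s ≤ 0 then μ1
  else if δ * sqn < s then μ0
  else ENNReal.ofReal (1 - alphaDelta β δ (s / sqn)) • μ0 +
    ENNReal.ofReal (alphaDelta β δ (s / sqn)) • μ1

/-- The law of `S_k^{δ,ε,n}`: the controlled random walk started at `s(ε)√n`,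
whose increments are, conditionally on the current state, distributed
according to `stepMeasure` (independently of everything else). -/
def walkLaw (μ0 μ1 : Measure ℝ) (β δ ε : ℝ) (n : ℕ) : ℕ → Measure ℝ
  | 0 => Measure.dirac (sEps β ε * Real.sqrt n)
  | k + 1 => (walkLaw μ0 μ1 β δ ε n k).bind
      fun s => (stepMeasure μ0 μ1 β δ (Real.sqrt n) s).map fun z => s + z

/-! ### The Gaussian distribution function -/

lemma gpdf_eq_gaussianPDFReal : gpdf = ProbabilityTheory.gaussianPDFReal 0 1 := by
  funext u
  simp [gpdf, ProbabilityTheory.gaussianPDFReal]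

lemma gcdf_eq_cdf (t : ℝ) :
    gcdf t = ProbabilityTheory.cdf (ProbabilityTheory.gaussianReal 0 1) t := by
  rw [ProbabilityTheory.cdf_eq_real, measureReal_def,
    ProbabilityTheory.gaussianReal_apply_eq_integral _ one_ne_zero, gcdf, gpdf_eq_gaussianPDFReal,
    ENNReal.toReal_ofReal]
  exact setIntegral_nonneg measurableSet_Iic
    fun x _ => ProbabilityTheory.gaussianPDFReal_nonneg _ _ _

lemma gpdf_pos (u : ℝ) : 0 < gpdf u := by
  unfold gpdf
  positivity

lemma continuous_gpdf : Continuous gpdf := by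
  unfold gpdf
  fun_prop

lemma integrable_gpdf : Integrable gpdf := by
  rw [gpdf_eq_gaussianPDFReal]
  exact ProbabilityTheory.integrable_gaussianPDFReal 0 1

lemma hasDerivAt_gcdf (t : ℝ) : HasDerivAt gcdf (gpdf t) t := by
  have h : gcdf = fun y => (∫ u in Set.Iic 0, gpdf u) + ∫ u in (0 : ℝ)..y, gpdf u := by
    funext y
    rw [← intervalIntegral.integral_Iic_sub_Iic integrable_gpdf.integrableOn
      integrable_gpdf.integrableOn, gcdf]
    ring
  rw [h]
  exact (intervalIntegral.integral_hasDerivAt_right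
    (continuous_gpdf.intervalIntegrable _ _)
    (continuous_gpdf.stronglyMeasurableAtFilter _ _) continuous_gpdf.continuousAt).const_add _

lemma continuous_gcdf : Continuous gcdf :=
  continuous_iff_continuousAt.2 fun t => (hasDerivAt_gcdf t).continuousAt

lemma strictMono_gcdf : StrictMono gcdf :=
  strictMono_of_deriv_pos fun t => by
    rw [(hasDerivAt_gcdf t).deriv]
    exact gpdf_pos t

lemma tendsto_gcdf_atTop : Tendsto gcdf atTop (nhds 1) := by
  rw [show gcdf = fun t => _ from funext gcdf_eq_cdf]
  exact ProbabilityTheory.tendsto_cdf_atTop _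

lemma tendsto_gcdf_atBot : Tendsto gcdf atBot (nhds 0) := by
  rw [show gcdf = fun t => _ from funext gcdf_eq_cdf]
  exact ProbabilityTheory.tendsto_cdf_atBot _

lemma gcdf_nonneg (t : ℝ) : 0 ≤ gcdf t := by
  rw [gcdf_eq_cdf]
  exact ProbabilityTheory.cdf_nonneg _ _

lemma gcdf_zero : gcdf 0 = 1 / 2 := by
  have h1 : ∫ u in Set.Ioi (0 : ℝ), gpdf u = gcdf 0 := by
    have := integral_comp_neg_Iic (0 : ℝ) gpdf
    rw [neg_zero] at this
    rw [← this, gcdf]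
    simp [gpdf]
  have h2 : (∫ u in Set.Iic (0 : ℝ), gpdf u) + ∫ u in Set.Ioi (0 : ℝ), gpdf u = 1 := by
    rw [intervalIntegral.integral_Iic_add_Ioi integrable_gpdf.integrableOn
      integrable_gpdf.integrableOn, gpdf_eq_gaussianPDFReal]
    exact ProbabilityTheory.integral_gaussianPDFReal_eq_one 0 one_ne_zero
  rw [h1] at h2
  change gcdf 0 + gcdf 0 = 1 at h2
  linarith

lemma gcdf_gcdfInv {p : ℝ} (h0 : 0 < p) (h1 : p < 1) : gcdf (gcdfInv p) = p := by
  apply Function.invFun_eq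
  obtain ⟨a, ha⟩ := (tendsto_gcdf_atBot.eventually (gt_mem_nhds h0)).exists
  obtain ⟨b, hb⟩ := (tendsto_gcdf_atTop.eventually (lt_mem_nhds h1)).exists
  exact mem_range_of_exists_le_of_exists_ge continuous_gcdf ⟨a, ha.le⟩ ⟨b, hb.le⟩

/-! ### Gaussian monomials -/

/-- The monomial `x ^ j * t ^ (-p)` times the Gaussian factor `exp (-q x² / t)`. -/
def gmon (j : ℕ) (p q t x : ℝ) : ℝ := x ^ j * Real.exp (-(p * Real.log t) - q * x ^ 2 / t)

lemma gmon_div {t : ℝ} (ht : 0 < t) (j : ℕ) (p q x : ℝ) :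
    gmon j p q t x / t = gmon j (p + 1) q t x := by
  have : Real.exp (-((p + 1) * Real.log t) - q * x ^ 2 / t)
      = Real.exp (-(p * Real.log t) - q * x ^ 2 / t) / t := by
    rw [show -((p + 1) * Real.log t) - q * x ^ 2 / t
      = (-(p * Real.log t) - q * x ^ 2 / t) - Real.log t by ring, Real.exp_sub, Real.exp_log ht]
  rw [gmon, gmon, this]
  ring

lemma gmon_one_eq_mul (p q t x : ℝ) : gmon 1 p q t x = gmon 0 p q t x * x := by
  simp only [gmon]
  ring

lemma hasDerivAt_gmon_space {t : ℝ} (ht : 0 < t) (j : ℕ) (p q x : ℝ) :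
    HasDerivAt (fun y => gmon j p q t y)
      (j * gmon (j - 1) p q t x - 2 * q * gmon (j + 1) (p + 1) q t x) x := by
  have h1 : HasDerivAt (fun y : ℝ => -(p * Real.log t) - q * y ^ 2 / t) (-(q * (2 * x) / t)) x := by
    have := (((hasDerivAt_pow 2 x).const_mul q).div_const t).const_sub (-(p * Real.log t))
    simpa using this
  refine ((hasDerivAt_pow j x).mul h1.exp).congr_deriv ?_
  rw [← gmon_div ht]
  simp only [gmon]
  ring

lemma hasDerivAt_gmon_time {t : ℝ} (ht : 0 < t) (j : ℕ) (p q x : ℝ) :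
    HasDerivAt (fun τ => gmon j p q τ x)
      (-p * gmon j (p + 1) q t x + q * gmon (j + 2) (p + 1 + 1) q t x) t := by
  have h1 : HasDerivAt (fun τ : ℝ => -(p * Real.log τ) - q * x ^ 2 / τ)
      (-(p * t⁻¹) - q * x ^ 2 * (-(t ^ 2)⁻¹)) t := by
    simp only [div_eq_mul_inv]
    exact ((Real.hasDerivAt_log ht.ne').const_mul p).neg.sub
      ((hasDerivAt_inv ht.ne').const_mul (q * x ^ 2))
  refine (h1.exp.const_mul (x ^ j)).congr_deriv ?_
  rw [← gmon_div ht, ← gmon_div ht, ← gmon_div ht]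
  simp only [gmon]
  field_simp
  ring

lemma abs_pow_mul_exp_le {c : ℝ} (hc : 0 < c) (j : ℕ) :
    ∃ C : ℝ, ∀ x : ℝ, |x| ^ j * Real.exp (-(c * x ^ 2)) ≤ C := by
  refine ⟨1 + (j.factorial : ℝ) / c ^ j, fun x => ?_⟩
  have hE : Real.exp (-(c * x ^ 2)) ≤ 1 := Real.exp_le_one_iff.2 (by nlinarith [sq_nonneg x])
  have hE0 := Real.exp_pos (-(c * x ^ 2))
  have h1 : |x| ^ j ≤ 1 + (x ^ 2) ^ j := by
    rcases le_total |x| 1 with h | h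
    · have := pow_le_one₀ (n := j) (abs_nonneg x) h
      have : 0 ≤ (x ^ 2) ^ j := by positivity
      linarith
    · have : |x| ^ j ≤ (x ^ 2) ^ j := by
        apply pow_le_pow_left₀ (abs_nonneg x)
        rw [← sq_abs]
        nlinarith
      linarith
  have h2 : (x ^ 2) ^ j * Real.exp (-(c * x ^ 2)) ≤ (j.factorial : ℝ) / c ^ j := by
    have := Real.pow_div_factorial_le_exp (c * x ^ 2) (by positivity) j
    rw [Real.exp_neg, ← div_eq_mul_inv, div_le_div_iff₀ (Real.exp_pos _) (by positivity)]
    rw [div_le_iff₀ (by positivity), mul_pow] at this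
    linarith
  calc |x| ^ j * Real.exp (-(c * x ^ 2)) ≤ (1 + (x ^ 2) ^ j) * Real.exp (-(c * x ^ 2)) := by gcongr
    _ ≤ _ := by linarith

lemma exists_gmon_bound {η q : ℝ} (hη : 0 < η) (hq : 0 < q) (j : ℕ) (p : ℝ) :
    ∃ C : ℝ, 0 ≤ C ∧ ∀ t ∈ Icc η 2, ∀ x, |gmon j p q t x| ≤ C := by
  obtain ⟨C₁, hC₁⟩ := abs_pow_mul_exp_le (half_pos hq) j
  have hcont : ContinuousOn (fun t => Real.exp (-(p * Real.log t))) (Icc η 2) := by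
    have : ContinuousOn Real.log (Icc η 2) :=
      Real.continuousOn_log.mono fun t ht => (hη.trans_le ht.1).ne'
    fun_prop
  obtain ⟨C₂, hC₂⟩ := isCompact_Icc.exists_bound_of_continuousOn hcont
  have hC₁0 : 0 ≤ C₁ := le_trans (by positivity) (hC₁ 0)
  refine ⟨C₁ * |C₂|, by positivity, fun t ht x => ?_⟩
  have ht0 : 0 < t := hη.trans_le ht.1
  have h1 := (hC₂ t ht).trans (le_abs_self C₂)
  rw [Real.norm_eq_abs, Real.abs_exp] at h1
  have h2 : Real.exp (-(q * x ^ 2 / t)) ≤ Real.exp (-(q / 2 * x ^ 2)) := by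
    apply Real.exp_le_exp.2
    rw [neg_le_neg_iff, le_div_iff₀ ht0]
    have : 0 ≤ q * x ^ 2 := by positivity
    nlinarith [ht.2]
  rw [gmon, abs_mul, abs_pow, Real.abs_exp, sub_eq_add_neg, Real.exp_add]
  calc |x| ^ j * (Real.exp (-(p * Real.log t)) * Real.exp (-(q * x ^ 2 / t)))
      ≤ |x| ^ j * (|C₂| * Real.exp (-(q / 2 * x ^ 2))) := by gcongr
    _ = (|x| ^ j * Real.exp (-(q / 2 * x ^ 2))) * |C₂| := by ring
    _ ≤ C₁ * |C₂| := by gcongr; exact hC₁ x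

lemma exists_gmon_lipschitz_space {η q : ℝ} (hη : 0 < η) (hq : 0 < q) (j : ℕ) (p : ℝ) :
    ∃ C : ℝ, 0 ≤ C ∧ ∀ t ∈ Icc η 2, ∀ x y, |gmon j p q t x - gmon j p q t y| ≤ C * |x - y| := by
  obtain ⟨C₁, hC₁0, hC₁⟩ := exists_gmon_bound hη hq (j - 1) p
  obtain ⟨C₂, hC₂0, hC₂⟩ := exists_gmon_bound hη hq (j + 1) (p + 1)
  refine ⟨j * C₁ + 2 * q * C₂, by positivity, fun t ht x y => ?_⟩
  refine convex_univ.norm_image_sub_le_of_norm_hasDerivWithin_le (f := fun y => gmon j p q t y)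
    (fun z _ => (hasDerivAt_gmon_space (hη.trans_le ht.1) j p q z).hasDerivWithinAt)
    (fun z _ => ?_) (mem_univ y) (mem_univ x)
  refine (norm_sub_le _ _).trans ?_
  simp only [norm_mul, Real.norm_eq_abs, Nat.abs_cast, abs_of_pos hq, Nat.abs_ofNat]
  gcongr
  exacts [hC₁ t ht z, hC₂ t ht z]

lemma exists_gmon_lipschitz_time {η q : ℝ} (hη : 0 < η) (hq : 0 < q) (j : ℕ) (p : ℝ) :
    ∃ C : ℝ, 0 ≤ C ∧ ∀ t ∈ Icc η 2, ∀ τ ∈ Icc η 2, ∀ x,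
      |gmon j p q t x - gmon j p q τ x| ≤ C * |t - τ| := by
  obtain ⟨C₁, hC₁0, hC₁⟩ := exists_gmon_bound hη hq j (p + 1)
  obtain ⟨C₂, hC₂0, hC₂⟩ := exists_gmon_bound hη hq (j + 2) (p + 1 + 1)
  refine ⟨|p| * C₁ + q * C₂, by positivity, fun t ht τ hτ x => ?_⟩
  refine (convex_Icc η 2).norm_image_sub_le_of_norm_hasDerivWithin_le
    (f := fun y => gmon j p q y x)
    (fun z hz => (hasDerivAt_gmon_time (hη.trans_le hz.1) j p q x).hasDerivWithinAt)
    (fun z hz => ?_) hτ ht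
  refine (norm_add_le _ _).trans ?_
  simp only [norm_mul, Real.norm_eq_abs, abs_neg, abs_of_pos hq]
  gcongr
  exacts [hC₁ z hz x, hC₂ z hz x]

/-! ### Test functions and the verification argument -/

/-- `V` is a nonnegative function of time and space, on times in `[η, 2]`, with space derivatives
`Vx`, `Vxx` and time derivative `Vt`, where `Vxx` is `C`-Lipschitz in space and `Vt` is
`C`-Lipschitz in time. -/
structure IsTestFunction (η C : ℝ) (V Vx Vxx Vt : ℝ → ℝ → ℝ) : Prop where
  nonneg : ∀ t ∈ Icc η 2, ∀ x, 0 ≤ V t x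
  deriv_space : ∀ t ∈ Icc η 2, ∀ x, HasDerivAt (V t) (Vx t x) x
  deriv_space_two : ∀ t ∈ Icc η 2, ∀ x, HasDerivAt (Vx t) (Vxx t x) x
  deriv_time : ∀ t ∈ Icc η 2, ∀ x, HasDerivAt (fun τ => V τ x) (Vt t x) t
  lipschitz_space : ∀ t ∈ Icc η 2, ∀ x y, |Vxx t x - Vxx t y| ≤ C * |x - y|
  lipschitz_time : ∀ t ∈ Icc η 2, ∀ τ ∈ Icc η 2, ∀ x, |Vt t x - Vt τ x| ≤ C * |t - τ|

/-- A centred probability law on `[-K, K]` with variance `v`. -/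
structure IsCentredStep (K v : ℝ) (ν : Measure ℝ) : Prop where
  prob : IsProbabilityMeasure ν
  bounded : ∀ᵐ z ∂ν, |z| ≤ K
  mean : ∫ z, z ∂ν = 0
  var : ∫ z, z ^ 2 ∂ν = v

lemma IsCentredStep.integrable_pow {K v : ℝ} {ν : Measure ℝ} (h : IsCentredStep K v ν) (j : ℕ) :
    Integrable (fun z => z ^ j) ν := by
  have := h.prob
  refine Integrable.of_bound (by fun_prop) (K ^ j) ?_
  filter_upwards [h.bounded] with z hz
  rw [norm_pow, Real.norm_eq_abs]
  gcongr

lemma abs_taylor_two_le {g g' g'' : ℝ → ℝ} {C : ℝ} (hC : 0 ≤ C)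
    (h1 : ∀ x, HasDerivAt g (g' x) x) (h2 : ∀ x, HasDerivAt g' (g'' x) x)
    (hl : ∀ x y, |g'' x - g'' y| ≤ C * |x - y|) (x y : ℝ) :
    |g (x + y) - g x - g' x * y - g'' x / 2 * y ^ 2| ≤ C * |y| ^ 3 := by
  have hD1 : ∀ z ∈ Metric.closedBall x |y|, |g' z - g'' x * (z - x) - g' x| ≤ C * |y| * |y| := by
    intro z hz
    have hzx : |z - x| ≤ |y| := by simpa [Real.dist_eq] using hz
    have := (convex_closedBall x |y|).norm_image_sub_le_of_norm_hasDerivWithin_le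
      (f := fun z => g' z - g'' x * (z - x)) (f' := fun z => g'' z - g'' x) (C := C * |y|)
      (fun w _ => (((h2 w).sub (((hasDerivAt_id w).sub_const x).const_mul (g'' x))).congr_deriv
        (by simp)).hasDerivWithinAt)
      (fun w hw => (hl w x).trans (mul_le_mul_of_nonneg_left
        (by simpa [Real.dist_eq] using hw) hC))
      (Metric.mem_closedBall_self (abs_nonneg y)) hz
    simp only [Real.norm_eq_abs, sub_self, mul_zero, sub_zero] at this
    exact this.trans (by gcongr)
  have := (convex_closedBall x |y|).norm_image_sub_le_of_norm_hasDerivWithin_le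
      (f := fun z => g z - g' x * (z - x) - g'' x / 2 * (z - x) ^ 2)
      (f' := fun z => g' z - g'' x * (z - x) - g' x) (C := C * |y| * |y|)
      (fun w _ => by
        have := ((h1 w).sub (((hasDerivAt_id w).sub_const x).const_mul (g' x))).sub
          ((((hasDerivAt_id w).sub_const x).pow 2).const_mul (g'' x / 2))
        refine (this.congr_deriv ?_).hasDerivWithinAt
        simp
        ring)
      hD1 (Metric.mem_closedBall_self (abs_nonneg y)) (y := x + y) (by simp)
  simp only [Real.norm_eq_abs, sub_self, mul_zero, sub_zero, add_sub_cancel_left] at this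
  calc |g (x + y) - g x - g' x * y - g'' x / 2 * y ^ 2|
      = |g (x + y) - g' x * y - g'' x / 2 * y ^ 2 - (g x - g'' x / 2 * 0 ^ 2)| := by
        congr 1
        ring
    _ ≤ C * |y| * |y| * |y| := by simpa using this
    _ = C * |y| ^ 3 := by ring

namespace IsTestFunction

variable {η C : ℝ} {V Vx Vxx Vt : ℝ → ℝ → ℝ}

lemma time_increment (hV : IsTestFunction η C V Vx Vxx Vt) (hC : 0 ≤ C) {t h : ℝ} (hh : 0 ≤ h)
    (ht : η ≤ t) (hth : t + h ≤ 2) (x : ℝ) :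
    V t x + h * Vt t x ≤ V (t + h) x + C * h ^ 2 := by
  have hsub : Icc t (t + h) ⊆ Icc η 2 := Icc_subset_Icc ht hth
  have := (convex_Icc t (t + h)).norm_image_sub_le_of_norm_hasDerivWithin_le
      (f := fun τ => V τ x - Vt t x * (τ - t)) (f' := fun τ => Vt τ x - Vt t x) (C := C * h)
      (fun w hw => (((hV.deriv_time w (hsub hw) x).sub
        (((hasDerivAt_id w).sub_const t).const_mul (Vt t x))).congr_deriv
          (by simp)).hasDerivWithinAt)
      (fun w hw => (hV.lipschitz_time w (hsub hw) t (hsub ⟨le_rfl, by linarith⟩) x).trans (by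
        gcongr
        rw [abs_of_nonneg (by linarith [hw.1])]
        linarith [hw.2]))
      (left_mem_Icc.2 (by linarith)) (right_mem_Icc.2 (by linarith))
  simp only [Real.norm_eq_abs, sub_self, mul_zero, sub_zero, add_sub_cancel_left,
    abs_of_nonneg hh] at this
  nlinarith [(abs_le.1 this).1]

lemma lintegral_step_le (hV : IsTestFunction η C V Vx Vxx Vt) (hC : 0 ≤ C) {t h K v e x : ℝ}
    {ν : Measure ℝ} (hν : IsCentredStep K v ν) (hh : 0 ≤ h) (hh1 : h ≤ 1)
    (ht : η ≤ t) (hth : t + h ≤ 2) (hsup : v / 2 * Vxx t x ≤ Vt t x + e) :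
    ∫⁻ z, ENNReal.ofReal (V t (x + √h * z)) ∂ν
      ≤ ENNReal.ofReal (V (t + h) x + h * (e + C * (1 + K ^ 3) * √h)) := by
  have := hν.prob
  have htm : t ∈ Icc η 2 := ⟨ht, by linarith⟩
  have hi1 : Integrable (fun z : ℝ => z) ν := by simpa using hν.integrable_pow 1
  have hi2 := hν.integrable_pow 2
  have hsq : √h ^ 2 = h := Real.sq_sqrt hh
  set P : ℝ → ℝ := fun z => V t x + C * (√h * K) ^ 3 + (Vx t x * √h) * z + (Vxx t x / 2 * h) * z ^ 2
    with hP
  have hle : ∀ᵐ z ∂ν, V t (x + √h * z) ≤ P z := by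
    filter_upwards [hν.bounded] with z hz
    have h1 := (abs_le.1 (abs_taylor_two_le hC (hV.deriv_space t htm) (hV.deriv_space_two t htm)
      (hV.lipschitz_space t htm) x (√h * z))).2
    have h2 : |√h * z| ^ 3 ≤ (√h * K) ^ 3 := by
      rw [abs_mul, abs_of_nonneg (Real.sqrt_nonneg h)]
      gcongr
    have h3 := mul_le_mul_of_nonneg_left h2 hC
    rw [mul_pow, hsq] at h1
    simp only [hP]
    linarith
  have hPi : Integrable P ν :=
    ((integrable_const _).add (hi1.const_mul _)).add (hi2.const_mul _)
  have hPint : ∫ z, P z ∂ν = V t x + C * (√h * K) ^ 3 + Vxx t x / 2 * h * v := by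
    have hi3 : Integrable (fun z => V t x + C * (√h * K) ^ 3 + (Vx t x * √h) * z) ν :=
      (integrable_const _).add (hi1.const_mul _)
    rw [hP, integral_add hi3 (hi2.const_mul _), integral_add (integrable_const _)
      (hi1.const_mul _), integral_const_mul, integral_const_mul, hν.mean, hν.var]
    simp
  calc ∫⁻ z, ENNReal.ofReal (V t (x + √h * z)) ∂ν
      ≤ ∫⁻ z, ENNReal.ofReal (P z) ∂ν :=
        lintegral_mono_ae (hle.mono fun z hz => ENNReal.ofReal_le_ofReal hz)
    _ = ENNReal.ofReal (∫ z, P z ∂ν) :=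
        (ofReal_integral_eq_lintegral_ofReal hPi
          (hle.mono fun z hz => (hV.nonneg t htm _).trans hz)).symm
    _ ≤ _ := by
        apply ENNReal.ofReal_le_ofReal
        rw [hPint]
        have h1 := hV.time_increment hC hh ht hth x
        have h2 := mul_le_mul_of_nonneg_left hsup hh
        have h3 : h ≤ √h := by
          rw [← Real.sqrt_sq hh]
          exact Real.sqrt_le_sqrt (by rw [Real.sqrt_sq hh]; nlinarith)
        have h4 : C * h ^ 2 ≤ C * (h * √h) := by
          rw [sq]
          gcongr
        have h5 : C * (√h * K) ^ 3 = C * K ^ 3 * (h * √h) := by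
          rw [show (√h * K) ^ 3 = K ^ 3 * (√h ^ 2 * √h) by ring, hsq]
          ring
        rw [h5]
        linarith

end IsTestFunction

/-! ### The law of the walk -/

lemma alphaDelta_mem_Icc {β δ x : ℝ} (hβ : β ∈ Ioo (0 : ℝ) 1) (hδ : 0 < δ) (hx0 : 0 ≤ x)
    (hxδ : x ≤ δ) : alphaDelta β δ x ∈ Icc (0 : ℝ) 1 := by
  obtain ⟨h0, h1⟩ := hβ
  have hd : 0 < 1 - β ^ 2 := by nlinarith
  have ha : 0 ≤ x * ((1 - β) / δ) := mul_nonneg hx0 (div_nonneg (by linarith) hδ.le)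
  have hb : x * ((1 - β) / δ) ≤ 1 - β := by
    rw [mul_div_assoc', div_le_iff₀ hδ, mul_comm]
    exact mul_le_mul_of_nonneg_left hxδ (by linarith)
  constructor
  · exact div_nonneg (by nlinarith) hd.le
  · rw [alphaDelta, div_le_one hd]
    nlinarith

lemma IsCentredStep.mixture {K v₀ v₁ a : ℝ} {μ₀ μ₁ : Measure ℝ} (h₀ : IsCentredStep K v₀ μ₀)
    (h₁ : IsCentredStep K v₁ μ₁) (ha : a ∈ Icc (0 : ℝ) 1) :
    IsCentredStep K ((1 - a) * v₀ + a * v₁)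
      (ENNReal.ofReal (1 - a) • μ₀ + ENNReal.ofReal a • μ₁) := by
  have := h₀.prob
  have := h₁.prob
  have ha' : 0 ≤ 1 - a := by linarith [ha.2]
  have key : ∀ f : ℝ → ℝ, Integrable f μ₀ → Integrable f μ₁ →
      ∫ z, f z ∂(ENNReal.ofReal (1 - a) • μ₀ + ENNReal.ofReal a • μ₁)
        = (1 - a) * ∫ z, f z ∂μ₀ + a * ∫ z, f z ∂μ₁ := by
    intro f hf₀ hf₁
    rw [integral_add_measure (hf₀.smul_measure ENNReal.ofReal_ne_top)
      (hf₁.smul_measure ENNReal.ofReal_ne_top), integral_smul_measure, integral_smul_measure,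
      ENNReal.toReal_ofReal ha.1, ENNReal.toReal_ofReal ha', smul_eq_mul, smul_eq_mul]
  refine ⟨⟨?_⟩, ?_, ?_, ?_⟩
  · simp [← ENNReal.ofReal_add ha' ha.1]
  · rw [ae_add_measure_iff]
    exact ⟨Measure.ae_smul_measure h₀.bounded _, Measure.ae_smul_measure h₁.bounded _⟩
  · rw [key _ (by simpa using h₀.integrable_pow 1) (by simpa using h₁.integrable_pow 1), h₀.mean,
      h₁.mean]
    simp
  · rw [key _ (h₀.integrable_pow 2) (h₁.integrable_pow 2), h₀.var, h₁.var]

lemma exists_isCentredStep_stepMeasure {β δ K sqn : ℝ} {μ0 μ1 : Measure ℝ}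
    (hβ : β ∈ Ioo (0 : ℝ) 1) (hδ : 0 < δ) (hsqn : 0 < sqn)
    (h₀ : IsCentredStep K (β ^ 2) μ0) (h₁ : IsCentredStep K 1 μ1) (s : ℝ) :
    ∃ v, IsCentredStep K v (stepMeasure μ0 μ1 β δ sqn s) ∧ β ^ 2 ≤ v ∧ v ≤ 1 ∧
      (s / sqn ≤ 0 → v = 1) ∧ (δ < s / sqn → v = β ^ 2) := by
  have hβ2 : β ^ 2 ≤ 1 := by nlinarith [hβ.1, hβ.2]
  unfold stepMeasure
  split_ifs with hs hs'
  · refine ⟨1, h₁, hβ2, le_rfl, fun _ => rfl, fun h => ?_⟩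
    have : s / sqn ≤ 0 := div_nonpos_of_nonpos_of_nonneg hs hsqn.le
    linarith
  · refine ⟨β ^ 2, h₀, le_rfl, hβ2, fun h => ?_, fun _ => rfl⟩
    have : 0 < s / sqn := div_pos (not_le.1 hs) hsqn
    linarith
  · push Not at hs hs'
    have hx0 : 0 < s / sqn := div_pos hs hsqn
    have hx1 : s / sqn ≤ δ := (div_le_iff₀ hsqn).2 hs'
    have ha := alphaDelta_mem_Icc hβ hδ hx0.le hx1
    refine ⟨_, h₀.mixture h₁ ha, ?_, ?_, fun h => ?_, fun h => ?_⟩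
    · nlinarith [ha.1, ha.2]
    · nlinarith [ha.1, ha.2]
    · linarith
    · linarith

lemma measurable_map_stepMeasure (μ0 μ1 : Measure ℝ) [SFinite μ0] [SFinite μ1] (β δ sqn : ℝ) :
    Measurable fun s => (stepMeasure μ0 μ1 β δ sqn s).map fun z => s + z := by
  refine Measure.measurable_of_measurable_coe _ fun B hB => ?_
  have hm : ∀ μ : Measure ℝ, SFinite μ → Measurable fun s : ℝ => μ ((fun z => s + z) ⁻¹' B) :=
    fun μ _ => measurable_measure_prodMk_left (ν := μ)
      ((measurable_fst.add measurable_snd : Measurable fun p : ℝ × ℝ => p.1 + p.2) hB)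
  have hα : Measurable fun s : ℝ => alphaDelta β δ (s / sqn) := by
    unfold alphaDelta
    fun_prop
  have heq : (fun s => (stepMeasure μ0 μ1 β δ sqn s).map (fun z => s + z) B) = fun s =>
      if s ≤ 0 then μ1 ((fun z => s + z) ⁻¹' B)
      else if δ * sqn < s then μ0 ((fun z => s + z) ⁻¹' B)
      else ENNReal.ofReal (1 - alphaDelta β δ (s / sqn)) * μ0 ((fun z => s + z) ⁻¹' B) +
        ENNReal.ofReal (alphaDelta β δ (s / sqn)) * μ1 ((fun z => s + z) ⁻¹' B) := by
    funext s
    rw [Measure.map_apply (by fun_prop) hB, stepMeasure]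
    split_ifs <;> simp
  rw [heq]
  refine Measurable.ite measurableSet_Iic (hm μ1 ‹_›) (Measurable.ite measurableSet_Ioi (hm μ0 ‹_›) ?_)
  exact ((measurable_const.sub hα).ennreal_ofReal.mul (hm μ0 ‹_›)).add
    (hα.ennreal_ofReal.mul (hm μ1 ‹_›))

section Walk

variable {β δ ε K : ℝ} {μ0 μ1 : Measure ℝ} {n : ℕ}

lemma lintegral_walkLaw_succ [SFinite μ0] [SFinite μ1] (k : ℕ) {g : ℝ → ℝ≥0∞} (hg : Measurable g) :
    ∫⁻ s, g s ∂walkLaw μ0 μ1 β δ ε n (k + 1)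
      = ∫⁻ s, ∫⁻ z, g (s + z) ∂stepMeasure μ0 μ1 β δ (√n) s ∂walkLaw μ0 μ1 β δ ε n k := by
  rw [walkLaw, Measure.lintegral_bind (measurable_map_stepMeasure μ0 μ1 β δ _).aemeasurable
    hg.aemeasurable]
  refine lintegral_congr fun s => ?_
  rw [lintegral_map hg (by fun_prop)]

lemma walkLaw_univ (hβ : β ∈ Ioo (0 : ℝ) 1) (hδ : 0 < δ) (hn : 0 < n)
    (h₀ : IsCentredStep K (β ^ 2) μ0) (h₁ : IsCentredStep K 1 μ1) (k : ℕ) :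
    walkLaw μ0 μ1 β δ ε n k univ = 1 := by
  have := h₀.prob
  have := h₁.prob
  have hsqn : 0 < √(n : ℝ) := Real.sqrt_pos.2 (by exact_mod_cast hn)
  induction k with
  | zero => simp [walkLaw]
  | succ k ih =>
    rw [← lintegral_one, lintegral_walkLaw_succ k measurable_const]
    refine (lintegral_congr (g := fun _ => 1) fun s => ?_).trans (by simpa using ih)
    obtain ⟨v, hv, -⟩ := exists_isCentredStep_stepMeasure hβ hδ hsqn h₀ h₁ s
    have := hv.prob
    simp

variable {η C e : ℝ} {V Vx Vxx Vt : ℝ → ℝ → ℝ}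

/-- A supersolution, up to a source of size `e`, of the heat equations with the variances the walk
may use is almost a supermartingale along the rescaled walk. -/
lemma IsTestFunction.lintegral_walkLaw_le (hV : IsTestFunction η C V Vx Vxx Vt) (hC : 0 ≤ C)
    (he : 0 ≤ e) (hK : 0 ≤ K) (hη1 : η ≤ 1) (hβ : β ∈ Ioo (0 : ℝ) 1) (hδ : 0 < δ) (hn : 0 < n)
    (h₀ : IsCentredStep K (β ^ 2) μ0) (h₁ : IsCentredStep K 1 μ1)
    (hsup : ∀ t ∈ Icc η 2, ∀ x v, β ^ 2 ≤ v → v ≤ 1 → (x ≤ 0 → v = 1) → (δ < x → v = β ^ 2) →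
      v / 2 * Vxx t x ≤ Vt t x + e) :
    ∫⁻ s, ENNReal.ofReal (V η (s / √n)) ∂walkLaw μ0 μ1 β δ ε n n
      ≤ ENNReal.ofReal (V (1 + η) (sEps β ε) + (e + C * (1 + K ^ 3) / √n)) := by
  have := h₀.prob
  have := h₁.prob
  have hn' : (0 : ℝ) < n := by exact_mod_cast hn
  have hsqn : 0 < √(n : ℝ) := Real.sqrt_pos.2 hn'
  set r : ℝ := e + C * (1 + K ^ 3) / √n with hr
  have hr0 : 0 ≤ r := by positivity
  have key : ∀ k : ℕ, k ≤ n →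
      ∫⁻ s, ENNReal.ofReal (V (η + (n - k : ℝ) / n) (s / √n)) ∂walkLaw μ0 μ1 β δ ε n k
        ≤ ENNReal.ofReal (V (1 + η) (sEps β ε) + k / n * r) := by
    intro k
    induction k with
    | zero =>
      intro _
      rw [walkLaw, lintegral_dirac]
      simp [hn'.ne', hsqn.ne', add_comm]
    | succ k ih =>
      intro hk
      have hk' : (k : ℝ) + 1 ≤ n := by exact_mod_cast hk
      set t : ℝ := η + (n - (k + 1 : ℕ) : ℝ) / n with ht
      have hth : t + 1 / n = η + (n - k : ℝ) / n := by
        rw [ht]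
        push_cast
        field_simp
        ring
      have htη : η ≤ t := by
        rw [ht]
        push_cast
        have : 0 ≤ (n - (k + 1) : ℝ) / n := div_nonneg (by linarith) hn'.le
        linarith
      have hth2 : t + 1 / n ≤ 2 := by
        rw [hth]
        have : (n - k : ℝ) / n ≤ 1 := (div_le_one hn').2 (by linarith [Nat.cast_nonneg (α := ℝ) k])
        linarith
      have hn1 : (1 : ℝ) / n ≤ 1 := (div_le_one hn').2 (by exact_mod_cast hn)
      have htm : t ∈ Icc η 2 := ⟨htη, by linarith [one_div_pos.2 hn']⟩
      have hc : Continuous (V t) :=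
        continuous_iff_continuousAt.2 fun x => (hV.deriv_space t htm x).continuousAt
      have hsi : √(1 / (n : ℝ)) = 1 / √n := by rw [Real.sqrt_div zero_le_one, Real.sqrt_one]
      rw [lintegral_walkLaw_succ k (by fun_prop)]
      calc _ ≤ ∫⁻ s, (ENNReal.ofReal (V (η + (n - k : ℝ) / n) (s / √n))
                + ENNReal.ofReal (1 / n * r)) ∂walkLaw μ0 μ1 β δ ε n k := by
            refine lintegral_mono fun s => ?_
            obtain ⟨v, hv, hv1, hv2, hv3, hv4⟩ :=
              exists_isCentredStep_stepMeasure hβ hδ hsqn h₀ h₁ s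
            have hstep := hV.lintegral_step_le hC hv (by positivity) hn1 htη hth2
              (hsup t htm (s / √n) v hv1 hv2 hv3 hv4)
            rw [hsi, hth] at hstep
            rw [← ENNReal.ofReal_add (hV.nonneg _ (by rw [← hth]; exact ⟨by
              linarith [one_div_pos.2 hn'], hth2⟩) _) (by positivity)]
            refine le_of_eq_of_le (lintegral_congr fun z => ?_) (hstep.trans_eq ?_)
            · congr 2
              ring
            · congr 3
              rw [hr]
              ring
        _ ≤ ENNReal.ofReal (V (1 + η) (sEps β ε) + k / n * r) + ENNReal.ofReal (1 / n * r) := by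
            rw [lintegral_add_right _ measurable_const, lintegral_const,
              walkLaw_univ hβ hδ hn h₀ h₁, mul_one]
            gcongr
            exact ih (by omega)
        _ = _ := by
            have := hV.nonneg (1 + η) ⟨by linarith, by linarith⟩ (sEps β ε)
            rw [← ENNReal.ofReal_add (by positivity) (by positivity)]
            congr 1
            push_cast
            ring
  have := key n le_rfl
  rwa [sub_self, zero_div, add_zero, div_self hn'.ne', one_mul] at this

end Walk

/-! ### Gluing at the origin -/

lemma hasDerivAt_glue {f g f' g' : ℝ → ℝ} (hf : ∀ x, HasDerivAt f (f' x) x)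
    (hg : ∀ x, HasDerivAt g (g' x) x) (h0 : f 0 = g 0) (h0' : f' 0 = g' 0) (x : ℝ) :
    HasDerivAt (fun y => if y ≤ 0 then f y else g y) (if x ≤ 0 then f' x else g' x) x := by
  rcases lt_trichotomy x 0 with hx | rfl | hx
  · rw [if_pos hx.le]
    refine (hf x).congr_of_eventuallyEq ?_
    filter_upwards [Iio_mem_nhds hx] with y hy
    exact if_pos (le_of_lt hy)
  · rw [if_pos le_rfl]
    have h1 : HasDerivWithinAt (fun y => if y ≤ 0 then f y else g y) (f' 0) (Iic 0) 0 :=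
      (hf 0).hasDerivWithinAt.congr (fun y hy => if_pos hy) (if_pos le_rfl)
    have h2 : HasDerivWithinAt (fun y => if y ≤ 0 then f y else g y) (f' 0) (Ici 0) 0 := by
      rw [h0']
      refine (hg 0).hasDerivWithinAt.congr (fun y hy => ?_) ((if_pos le_rfl).trans h0)
      rcases (mem_Ici.1 hy).eq_or_lt with rfl | hy
      · exact (if_pos le_rfl).trans h0
      · exact if_neg (not_le.2 hy)
    have := h1.union h2
    rwa [Iic_union_Ici, hasDerivWithinAt_univ] at this
  · rw [if_neg (not_le.2 hx)]
    refine (hg x).congr_of_eventuallyEq ?_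
    filter_upwards [Ioi_mem_nhds hx] with y hy
    exact if_neg (not_le.2 hy)

lemma lipschitz_glue {f g : ℝ → ℝ} {C : ℝ} (hf : ∀ x y, |f x - f y| ≤ C * |x - y|)
    (hg : ∀ x y, |g x - g y| ≤ C * |x - y|) (h0 : f 0 = g 0) (x y : ℝ) :
    |(if x ≤ 0 then f x else g x) - (if y ≤ 0 then f y else g y)| ≤ C * |x - y| := by
  have cross : ∀ x y : ℝ, x ≤ 0 → 0 ≤ y → |f x - g y| ≤ C * |x - y| := by
    intro x y hx hy
    have h1 := hf x 0
    have h2 := hg 0 y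
    rw [sub_zero, abs_of_nonpos hx] at h1
    rw [zero_sub, abs_neg, abs_of_nonneg hy] at h2
    have h3 := abs_sub_le (f x) (f 0) (g y)
    rw [abs_of_nonpos (by linarith : x - y ≤ 0)]
    rw [h0] at h1 h3
    linarith
  split_ifs with hx hy hy
  · exact hf x y
  · exact cross x y hx (not_le.1 hy).le
  · rw [abs_sub_comm, abs_sub_comm x]
    exact cross y x hy (not_le.1 hx).le
  · exact hg x y

/-! ### The occupation test function -/

lemma exists_isTestFunction_gmon {η : ℝ} (hη : 0 < η) (γ : ℝ) :
    ∃ C : ℝ, 0 ≤ C ∧ IsTestFunction η C (gmon 0 γ (1 / 2))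
      (fun t x => -gmon 1 (γ + 1) (1 / 2) t x)
      (fun t x => -gmon 0 (γ + 1) (1 / 2) t x + gmon 2 (γ + 1 + 1) (1 / 2) t x)
      (fun t x => -γ * gmon 0 (γ + 1) (1 / 2) t x + 1 / 2 * gmon 2 (γ + 1 + 1) (1 / 2) t x) := by
  have hq : (0 : ℝ) < 1 / 2 := by norm_num
  obtain ⟨C₁, h₁, hC₁⟩ := exists_gmon_lipschitz_space hη hq 0 (γ + 1)
  obtain ⟨C₂, h₂, hC₂⟩ := exists_gmon_lipschitz_space hη hq 2 (γ + 1 + 1)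
  obtain ⟨C₃, h₃, hC₃⟩ := exists_gmon_lipschitz_time hη hq 0 (γ + 1)
  obtain ⟨C₄, h₄, hC₄⟩ := exists_gmon_lipschitz_time hη hq 2 (γ + 1 + 1)
  refine ⟨C₁ + C₂ + |γ| * C₃ + C₄, by positivity, ?_, ?_, ?_, ?_, ?_, ?_⟩
  · intro t _ x
    rw [gmon]
    positivity
  · intro t ht x
    exact (hasDerivAt_gmon_space (hη.trans_le ht.1) 0 γ (1 / 2) x).congr_deriv (by simp)
  · intro t ht x
    exact (hasDerivAt_gmon_space (hη.trans_le ht.1) 1 (γ + 1) (1 / 2) x).neg.congr_deriv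
      (by simp; ring)
  · intro t ht x
    exact hasDerivAt_gmon_time (hη.trans_le ht.1) 0 γ (1 / 2) x
  · intro t ht x y
    have h1 := hC₁ t ht x y
    rw [abs_sub_comm] at h1
    have h2 := hC₂ t ht x y
    have h3 : 0 ≤ |γ| * C₃ * |x - y| := by positivity
    have h4 : 0 ≤ C₄ * |x - y| := by positivity
    have := abs_add_le (gmon 0 (γ + 1) (1 / 2) t y - gmon 0 (γ + 1) (1 / 2) t x)
      (gmon 2 (γ + 1 + 1) (1 / 2) t x - gmon 2 (γ + 1 + 1) (1 / 2) t y)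
    calc _ = |gmon 0 (γ + 1) (1 / 2) t y - gmon 0 (γ + 1) (1 / 2) t x +
          (gmon 2 (γ + 1 + 1) (1 / 2) t x - gmon 2 (γ + 1 + 1) (1 / 2) t y)| := by
          congr 1
          ring
      _ ≤ _ := by linarith
  · intro t ht τ hτ x
    have h1 := hC₃ t ht τ hτ x
    have h2 := hC₄ t ht τ hτ x
    have h3 : 0 ≤ C₁ * |t - τ| := by positivity
    have h4 : 0 ≤ C₂ * |t - τ| := by positivity
    have h5 : 0 ≤ C₄ * |t - τ| := by positivity
    have h6 := mul_le_mul_of_nonneg_left h1 (abs_nonneg γ)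
    have := abs_add_le (-γ * (gmon 0 (γ + 1) (1 / 2) t x - gmon 0 (γ + 1) (1 / 2) τ x))
      (1 / 2 * (gmon 2 (γ + 1 + 1) (1 / 2) t x - gmon 2 (γ + 1 + 1) (1 / 2) τ x))
    rw [abs_mul, abs_neg, abs_mul (1 / 2), abs_of_pos hq] at this
    calc _ = |-γ * (gmon 0 (γ + 1) (1 / 2) t x - gmon 0 (γ + 1) (1 / 2) τ x) +
          1 / 2 * (gmon 2 (γ + 1 + 1) (1 / 2) t x - gmon 2 (γ + 1 + 1) (1 / 2) τ x)| := by
          congr 1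
          ring
      _ ≤ _ := by linarith

lemma gmon_supersolution {β t v : ℝ} (hv : β ^ 2 ≤ v) (hv1 : v ≤ 1) (x : ℝ) :
    v / 2 * (-gmon 0 (β ^ 2 / 2 + 1) (1 / 2) t x + gmon 2 (β ^ 2 / 2 + 1 + 1) (1 / 2) t x)
      ≤ -(β ^ 2 / 2) * gmon 0 (β ^ 2 / 2 + 1) (1 / 2) t x
        + 1 / 2 * gmon 2 (β ^ 2 / 2 + 1 + 1) (1 / 2) t x + 0 := by
  have h0 : 0 ≤ gmon 0 (β ^ 2 / 2 + 1) (1 / 2) t x := by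
    rw [gmon]
    positivity
  have h2 : 0 ≤ gmon 2 (β ^ 2 / 2 + 1 + 1) (1 / 2) t x := by
    rw [gmon]
    positivity
  nlinarith

/-! ### Oscillating Brownian motion -/

/-- An affine image of the Gaussian distribution function at `-x / (σ √t)`. -/
def gbranch (a b σ t x : ℝ) : ℝ := a * gcdf (-(x / σ) * Real.exp (-(Real.log t / 2))) + b

/-- The probability that oscillating Brownian motion, with dispersion `1` on the negative and `β`
on the positive half line, started at `x`, is nonpositive at time `t`. -/
def oscProb (β t x : ℝ) : ℝ :=
  if x ≤ 0 then gbranch (2 / (1 + β)) (-((1 - β) / (1 + β))) 1 t x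
  else gbranch (β * (2 / (1 + β))) 0 β t x

/-- The constant in the derivatives of `oscProb`. -/
def oscConst (β : ℝ) : ℝ := 2 / (1 + β) * (√(2 * π))⁻¹

lemma exp_mul_gpdf {σ t : ℝ} (ht : 0 < t) (x : ℝ) :
    Real.exp (-(Real.log t / 2)) * gpdf (-(x / σ) * Real.exp (-(Real.log t / 2)))
      = (√(2 * π))⁻¹ * gmon 0 (1 / 2) (1 / (2 * σ ^ 2)) t x := by
  have he : Real.exp (-(Real.log t / 2)) ^ 2 = t⁻¹ := by
    rw [← Real.exp_nat_mul]
    push_cast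
    rw [show (2 : ℝ) * -(Real.log t / 2) = -Real.log t by ring, Real.exp_neg, Real.exp_log ht]
  rw [gpdf, gmon, mul_pow, he, mul_left_comm, ← Real.exp_add]
  simp only [pow_zero, one_mul]
  congr 2
  ring

lemma hasDerivAt_gbranch_space {a b σ k t : ℝ} (hσ : 0 < σ) (ht : 0 < t) (ha : a = σ * k) (x : ℝ) :
    HasDerivAt (gbranch a b σ t)
      (-(k * (√(2 * π))⁻¹) * gmon 0 (1 / 2) (1 / (2 * σ ^ 2)) t x) x := by
  have h1 : HasDerivAt (fun y => -(y / σ) * Real.exp (-(Real.log t / 2)))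
      (-(1 / σ) * Real.exp (-(Real.log t / 2))) x :=
    (((hasDerivAt_id x).div_const σ).neg).mul_const _
  refine ((((hasDerivAt_gcdf _).comp x h1).const_mul a).add_const b).congr_deriv ?_
  have h2 := exp_mul_gpdf (σ := σ) ht x
  calc _ = -k * (Real.exp (-(Real.log t / 2)) *
        gpdf (-(x / σ) * Real.exp (-(Real.log t / 2)))) := by
        rw [ha]
        field_simp
    _ = _ := by
        rw [h2]
        ring

lemma hasDerivAt_gbranch_time {a b σ k t : ℝ} (hσ : 0 < σ) (ht : 0 < t) (ha : a = σ * k) (x : ℝ) :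
    HasDerivAt (fun τ => gbranch a b σ τ x)
      (k * (√(2 * π))⁻¹ / 2 * gmon 1 (1 / 2 + 1) (1 / (2 * σ ^ 2)) t x) t := by
  have h1 : HasDerivAt (fun τ => -(x / σ) * Real.exp (-(Real.log τ / 2)))
      (-(x / σ) * (Real.exp (-(Real.log t / 2)) * -(t⁻¹ / 2))) t :=
    ((((Real.hasDerivAt_log ht.ne').div_const 2).neg).exp).const_mul _
  refine ((((hasDerivAt_gcdf _).comp t h1).const_mul a).add_const b).congr_deriv ?_
  have h2 := exp_mul_gpdf (σ := σ) ht x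
  rw [← gmon_div ht, gmon_one_eq_mul]
  calc _ = k * x * t⁻¹ / 2 *
        (Real.exp (-(Real.log t / 2)) * gpdf (-(x / σ) * Real.exp (-(Real.log t / 2)))) := by
        rw [ha]
        field_simp
    _ = _ := by
        rw [h2]
        field_simp

lemma hasDerivAt_gbranch_deriv {σ t : ℝ} (c : ℝ) (ht : 0 < t) (x : ℝ) :
    HasDerivAt (fun y => -c * gmon 0 (1 / 2) (1 / (2 * σ ^ 2)) t y)
      (c / σ ^ 2 * gmon 1 (1 / 2 + 1) (1 / (2 * σ ^ 2)) t x) x := by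
  refine ((hasDerivAt_gmon_space ht 0 (1 / 2) (1 / (2 * σ ^ 2)) x).const_mul (-c)).congr_deriv ?_
  simp
  ring

section OscProb

variable {β : ℝ}

lemma gbranch_zero_eq (hβ : 0 < β) (t : ℝ) :
    gbranch (2 / (1 + β)) (-((1 - β) / (1 + β))) 1 t 0 = gbranch (β * (2 / (1 + β))) 0 β t 0 := by
  simp only [gbranch, zero_div, neg_zero, zero_mul, gcdf_zero]
  field_simp
  ring

lemma oscProb_of_nonneg (hβ : 0 < β) {t x : ℝ} (hx : 0 ≤ x) :
    oscProb β t x = gbranch (β * (2 / (1 + β))) 0 β t x := by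
  rcases hx.eq_or_lt with rfl | hx
  · rw [oscProb, if_pos le_rfl, gbranch_zero_eq hβ]
  · rw [oscProb, if_neg (not_le.2 hx)]

lemma oscProb_nonneg (hβ : 0 < β) (t x : ℝ) : 0 ≤ oscProb β t x := by
  rcases le_total x 0 with hx | hx
  · rw [oscProb, if_pos hx, gbranch]
    have h : 1 / 2 ≤ gcdf (-(x / 1) * Real.exp (-(Real.log t / 2))) := by
      rw [← gcdf_zero]
      exact strictMono_gcdf.monotone (mul_nonneg (by simpa using hx) (Real.exp_pos _).le)
    have h2 := mul_le_mul_of_nonneg_left h (by positivity : 0 ≤ 2 / (1 + β))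
    have h3 : 2 / (1 + β) * (1 / 2) + -((1 - β) / (1 + β)) = β / (1 + β) := by
      field_simp
      ring
    have : 0 ≤ β / (1 + β) := by positivity
    linarith
  · rw [oscProb_of_nonneg hβ hx, gbranch]
    have := gcdf_nonneg (-(x / β) * Real.exp (-(Real.log t / 2)))
    positivity

lemma hasDerivAt_oscProb_time (hβ : 0 < β) {t : ℝ} (ht : 0 < t) (x : ℝ) :
    HasDerivAt (fun τ => oscProb β τ x)
      (oscConst β / 2 * if x ≤ 0 then gmon 1 (1 / 2 + 1) (1 / (2 * 1 ^ 2)) t x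
        else gmon 1 (1 / 2 + 1) (1 / (2 * β ^ 2)) t x) t := by
  unfold oscProb
  split_ifs
  · exact hasDerivAt_gbranch_time one_pos ht (one_mul _).symm x
  · exact hasDerivAt_gbranch_time hβ ht rfl x

lemma exists_isTestFunction_oscProb (hβ : 0 < β) {η : ℝ} (hη : 0 < η) :
    ∃ C : ℝ, 0 ≤ C ∧ IsTestFunction η C (oscProb β)
      (fun t x => if x ≤ 0 then -oscConst β * gmon 0 (1 / 2) (1 / (2 * 1 ^ 2)) t x
        else -oscConst β * gmon 0 (1 / 2) (1 / (2 * β ^ 2)) t x)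
      (fun t x => if x ≤ 0 then oscConst β / 1 ^ 2 * gmon 1 (1 / 2 + 1) (1 / (2 * 1 ^ 2)) t x
        else oscConst β / β ^ 2 * gmon 1 (1 / 2 + 1) (1 / (2 * β ^ 2)) t x)
      (fun t x => oscConst β / 2 * if x ≤ 0 then gmon 1 (1 / 2 + 1) (1 / (2 * 1 ^ 2)) t x
        else gmon 1 (1 / 2 + 1) (1 / (2 * β ^ 2)) t x) := by
  have hc : 0 < oscConst β := by
    unfold oscConst
    positivity
  have hq₁ : (0 : ℝ) < 1 / (2 * 1 ^ 2) := by norm_num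
  have hq₂ : 0 < 1 / (2 * β ^ 2) := by positivity
  obtain ⟨C₁, h₁, hC₁⟩ := exists_gmon_lipschitz_space hη hq₁ 1 (1 / 2 + 1)
  obtain ⟨C₂, h₂, hC₂⟩ := exists_gmon_lipschitz_space hη hq₂ 1 (1 / 2 + 1)
  obtain ⟨C₃, h₃, hC₃⟩ := exists_gmon_lipschitz_time hη hq₁ 1 (1 / 2 + 1)
  obtain ⟨C₄, h₄, hC₄⟩ := exists_gmon_lipschitz_time hη hq₂ 1 (1 / 2 + 1)
  have scale : ∀ {c a b D C d : ℝ}, 0 ≤ c → |a - b| ≤ D * d → 0 ≤ d → c * D ≤ C →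
      |c * a - c * b| ≤ C * d := by
    intro c a b D C d hc hab hd hD
    rw [← mul_sub, abs_mul, abs_of_nonneg hc]
    calc c * |a - b| ≤ c * (D * d) := by gcongr
      _ = c * D * d := by ring
      _ ≤ C * d := by gcongr
  have hp₁ : 0 ≤ oscConst β / 1 ^ 2 * C₁ := by positivity
  have hp₂ : 0 ≤ oscConst β / β ^ 2 * C₂ := by positivity
  have hp₃ : 0 ≤ oscConst β / 2 * C₃ := by positivity
  have hp₄ : 0 ≤ oscConst β / 2 * C₄ := by positivity
  refine ⟨oscConst β / 1 ^ 2 * C₁ + oscConst β / β ^ 2 * C₂ + oscConst β / 2 * C₃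
    + oscConst β / 2 * C₄, by positivity, ?_, ?_, ?_, ?_, ?_, ?_⟩
  · exact fun t _ x => oscProb_nonneg hβ t x
  · intro t ht x
    have ht0 : 0 < t := hη.trans_le ht.1
    exact hasDerivAt_glue
      (fun y => hasDerivAt_gbranch_space (k := 2 / (1 + β)) one_pos ht0 (one_mul _).symm y)
      (fun y => hasDerivAt_gbranch_space (k := 2 / (1 + β)) hβ ht0 rfl y)
      (gbranch_zero_eq hβ t) (by simp [gmon]) x
  · intro t ht x
    have ht0 : 0 < t := hη.trans_le ht.1
    exact hasDerivAt_glue (fun y => hasDerivAt_gbranch_deriv _ ht0 y)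
      (fun y => hasDerivAt_gbranch_deriv _ ht0 y) (by simp [gmon]) (by simp [gmon]) x
  · exact fun t ht x => hasDerivAt_oscProb_time hβ (hη.trans_le ht.1) x
  · intro t ht x y
    exact lipschitz_glue
      (f := fun x => oscConst β / 1 ^ 2 * gmon 1 (1 / 2 + 1) (1 / (2 * 1 ^ 2)) t x)
      (g := fun x => oscConst β / β ^ 2 * gmon 1 (1 / 2 + 1) (1 / (2 * β ^ 2)) t x)
      (fun x y => scale (by positivity) (hC₁ t ht x y) (abs_nonneg _) (by linarith))
      (fun x y => scale (by positivity) (hC₂ t ht x y) (abs_nonneg _) (by linarith))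
      (by simp [gmon]) x y
  · intro t ht τ hτ x
    split_ifs
    · exact scale (by positivity) (hC₃ t ht τ hτ x) (abs_nonneg _) (by linarith)
    · exact scale (by positivity) (hC₄ t ht τ hτ x) (abs_nonneg _) (by linarith)

lemma oscProb_supersolution (hβ : β ∈ Ioo (0 : ℝ) 1) {δ C t v x : ℝ} (hδ : 0 < δ) (hC : 0 ≤ C)
    (hl : ∀ x y : ℝ,
      |(if x ≤ 0 then oscConst β / 1 ^ 2 * gmon 1 (1 / 2 + 1) (1 / (2 * 1 ^ 2)) t x
        else oscConst β / β ^ 2 * gmon 1 (1 / 2 + 1) (1 / (2 * β ^ 2)) t x)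
      - (if y ≤ 0 then oscConst β / 1 ^ 2 * gmon 1 (1 / 2 + 1) (1 / (2 * 1 ^ 2)) t y
        else oscConst β / β ^ 2 * gmon 1 (1 / 2 + 1) (1 / (2 * β ^ 2)) t y)| ≤ C * |x - y|)
    (hv : β ^ 2 ≤ v) (hv1 : v ≤ 1) (hneg : x ≤ 0 → v = 1) (hpos : δ < x → v = β ^ 2) :
    v / 2 * (if x ≤ 0 then oscConst β / 1 ^ 2 * gmon 1 (1 / 2 + 1) (1 / (2 * 1 ^ 2)) t x
        else oscConst β / β ^ 2 * gmon 1 (1 / 2 + 1) (1 / (2 * β ^ 2)) t x)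
      ≤ (oscConst β / 2 * if x ≤ 0 then gmon 1 (1 / 2 + 1) (1 / (2 * 1 ^ 2)) t x
        else gmon 1 (1 / 2 + 1) (1 / (2 * β ^ 2)) t x) + C * δ := by
  have hβ0 := hβ.1
  have hCδ : 0 ≤ C * δ := by positivity
  rcases le_or_gt x 0 with hx | hx
  · rw [if_pos hx, if_pos hx, hneg hx]
    linarith
  · have h := hl x 0
    simp only [if_neg (not_le.2 hx), le_refl, if_true] at h ⊢
    set G := gmon 1 (1 / 2 + 1) (1 / (2 * β ^ 2)) t x
    have hG0 : gmon 1 (1 / 2 + 1) (1 / (2 * 1 ^ 2)) t 0 = 0 := by simp [gmon]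
    rw [hG0, mul_zero, sub_zero, sub_zero, abs_of_pos hx] at h
    have hdiv : oscConst β / 2 * G = β ^ 2 / 2 * (oscConst β / β ^ 2 * G) := by
      field_simp
    rw [hdiv]
    rcases le_or_gt x δ with hxδ | hxδ
    · have h1 : |oscConst β / β ^ 2 * G| ≤ C * δ := h.trans (by gcongr)
      have h2 : (v - β ^ 2) / 2 * (oscConst β / β ^ 2 * G) ≤ 1 * (C * δ) := by
        calc _ ≤ (v - β ^ 2) / 2 * |oscConst β / β ^ 2 * G| :=
              mul_le_mul_of_nonneg_left (le_abs_self _) (by linarith)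
          _ ≤ 1 * (C * δ) := by
              gcongr
              nlinarith
      linarith
    · rw [hpos hxδ]
      linarith

lemma oscProb_one_sEps (hβ : β ∈ Ioo (0 : ℝ) 1) {ε : ℝ} (hε : ε ∈ Ioo (0 : ℝ) 1) :
    oscProb β 1 (sEps β ε) = ε := by
  obtain ⟨hβ0, hβ1⟩ := hβ
  obtain ⟨hε0, hε1⟩ := hε
  have h1 : 0 < 1 + β := by linarith
  unfold sEps
  split_ifs with h
  · rw [le_div_iff₀ h1] at h
    have hp0 : 0 < ε * (1 + β) / (2 * β) := by positivity
    have hp1 : ε * (1 + β) / (2 * β) ≤ 1 / 2 := by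
      rw [div_le_iff₀ (by positivity)]
      linarith
    have hQ := gcdf_gcdfInv hp0 (by linarith)
    have hQ0 : gcdfInv (ε * (1 + β) / (2 * β)) ≤ 0 := by
      rw [← strictMono_gcdf.le_iff_le, hQ, gcdf_zero]
      exact hp1
    rw [oscProb_of_nonneg hβ0 (by nlinarith), gbranch]
    rw [show -(-β * gcdfInv (ε * (1 + β) / (2 * β)) / β) * Real.exp (-(Real.log 1 / 2))
      = gcdfInv (ε * (1 + β) / (2 * β)) by simp; field_simp, hQ]
    field_simp
    ring
  · rw [not_le, div_lt_iff₀ h1] at h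
    have hp0 : 1 / 2 < (ε * (1 + β) + (1 - β)) / 2 := by linarith
    have hp1 : (ε * (1 + β) + (1 - β)) / 2 < 1 := by nlinarith
    have hQ := gcdf_gcdfInv (by linarith) hp1
    have hQ0 : 0 < gcdfInv ((ε * (1 + β) + (1 - β)) / 2) := by
      rw [← strictMono_gcdf.lt_iff_lt, hQ, gcdf_zero]
      exact hp0
    rw [oscProb, if_pos (by linarith), gbranch]
    rw [show -(-gcdfInv ((ε * (1 + β) + (1 - β)) / 2) / 1) * Real.exp (-(Real.log 1 / 2))
      = gcdfInv ((ε * (1 + β) + (1 - β)) / 2) by simp, hQ]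
    field_simp
    ring

lemma one_sub_le_oscProb (hβ : 0 < β) {τ R t x : ℝ} (hR : 1 - τ ≤ gcdf R) (hR0 : 0 ≤ R)
    (hτ : 0 ≤ τ) (hx : x * Real.exp (-(Real.log t / 2)) ≤ -R) : 1 - 2 * τ ≤ oscProb β t x := by
  have hx0 : x ≤ 0 := by
    by_contra! h
    have := mul_pos h (Real.exp_pos (-(Real.log t / 2)))
    linarith
  rw [oscProb, if_pos hx0, gbranch]
  have h1 : 1 - τ ≤ gcdf (-(x / 1) * Real.exp (-(Real.log t / 2))) :=
    hR.trans (strictMono_gcdf.monotone (by rw [div_one]; linarith))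
  have h2 := mul_le_mul_of_nonneg_left h1 (by positivity : 0 ≤ 2 / (1 + β))
  have h3 : 2 / (1 + β) * (1 - τ) + -((1 - β) / (1 + β)) = 1 - 2 * (τ / (1 + β)) := by
    field_simp
    ring
  have h4 : τ / (1 + β) ≤ τ := div_le_self hτ (by linarith)
  linarith

end OscProb

/-! ### Choice of the parameters -/

lemma exists_gcdf_ge {τ : ℝ} (hτ : 0 < τ) : ∃ R : ℝ, 0 ≤ R ∧ 1 - τ ≤ gcdf R := by
  have h := tendsto_gcdf_atTop.eventually (lt_mem_nhds (by linarith : 1 - τ < 1))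
  obtain ⟨R, h1, h2⟩ := (h.and (eventually_ge_atTop 0)).exists
  exact ⟨R, h2, h1.le⟩

lemma exists_small_time {β ε γ τ : ℝ} (R : ℝ) (hβ : β ∈ Ioo (0 : ℝ) 1) (hε : ε ∈ Ioo (0 : ℝ) 1)
    (hγ : 0 < γ) (hτ : 0 < τ) :
    ∃ η : ℝ, 0 < η ∧ η ≤ 1 ∧ oscProb β (1 + η) (sEps β ε) ≤ ε + τ ∧
      Real.exp (R ^ 2 / 2 + γ * Real.log η) ≤ τ := by
  have hc : Tendsto (fun η : ℝ => oscProb β (1 + η) (sEps β ε)) (nhdsWithin 0 (Ioi 0)) (nhds ε) := by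
    have h1 := (hasDerivAt_oscProb_time hβ.1 one_pos (sEps β ε)).continuousAt.tendsto
    rw [oscProb_one_sEps hβ hε] at h1
    have h2 : Tendsto (fun η : ℝ => 1 + η) (nhdsWithin 0 (Ioi 0)) (nhds 1) := by
      have : Continuous fun η : ℝ => 1 + η := by fun_prop
      simpa using (this.tendsto 0).mono_left nhdsWithin_le_nhds
    exact h1.comp h2
  have he : Tendsto (fun η : ℝ => Real.exp (R ^ 2 / 2 + γ * Real.log η))
      (nhdsWithin 0 (Ioi 0)) (nhds 0) :=
    Real.tendsto_exp_atBot.comp (tendsto_atBot_add_const_left _ _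
      (Real.tendsto_log_nhdsGT_zero.const_mul_atBot hγ))
  have h3 : ∀ᶠ η : ℝ in nhdsWithin 0 (Ioi 0), η ∈ Ioc (0 : ℝ) 1 := Ioc_mem_nhdsGT one_pos
  obtain ⟨η, ⟨hη1, hη2⟩, hη3⟩ := (((hc.eventually (gt_mem_nhds (by linarith : ε < ε + τ))).and
    (he.eventually (gt_mem_nhds hτ))).and h3).exists
  exact ⟨η, hη3.1, hη3.2, hη1.le, hη2.le⟩

lemma one_le_exp_mul_gmon {η γ R x : ℝ} (hη : 0 < η) (hR : 0 ≤ R) (hx0 : x ≤ 0)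
    (hx : -R ≤ x * Real.exp (-(Real.log η / 2))) :
    1 ≤ Real.exp (R ^ 2 / 2 + γ * Real.log η) * gmon 0 γ (1 / 2) η x := by
  have he : Real.exp (-(Real.log η / 2)) ^ 2 = η⁻¹ := by
    rw [← Real.exp_nat_mul]
    push_cast
    rw [show (2 : ℝ) * -(Real.log η / 2) = -Real.log η by ring, Real.exp_neg, Real.exp_log hη]
  have hsq : (x * Real.exp (-(Real.log η / 2))) ^ 2 ≤ R ^ 2 :=
    sq_le_sq' hx ((mul_nonpos_of_nonpos_of_nonneg hx0 (Real.exp_pos _).le).trans hR)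
  rw [mul_pow, he] at hsq
  rw [gmon, pow_zero, one_mul, ← Real.exp_add, Real.one_le_exp_iff]
  have : 1 / 2 * x ^ 2 / η = x ^ 2 * η⁻¹ / 2 := by
    field_simp
  rw [this]
  linarith

lemma gmon_zero_le_one {γ q t : ℝ} (hγ : 0 ≤ γ) (hq : 0 ≤ q) (ht : 1 ≤ t) (x : ℝ) :
    gmon 0 γ q t x ≤ 1 := by
  rw [gmon, pow_zero, one_mul, Real.exp_le_one_iff]
  have h1 : 0 ≤ γ * Real.log t := mul_nonneg hγ (Real.log_nonneg ht)
  have h2 : 0 ≤ q * x ^ 2 / t := div_nonneg (by positivity) (by linarith)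
  linarith

lemma exists_div_sqrt_le (a : ℝ) {τ : ℝ} (hτ : 0 < τ) :
    ∃ N : ℕ, ∀ n : ℕ, N ≤ n → a / √(n : ℝ) ≤ τ := by
  have h : Tendsto (fun n : ℕ => a / √(n : ℝ)) atTop (nhds 0) :=
    (Real.tendsto_sqrt_atTop.comp tendsto_natCast_atTop_atTop).const_div_atTop a
  obtain ⟨N, hN⟩ := eventually_atTop.1 (h.eventually (gt_mem_nhds hτ))
  exact ⟨N, fun n hn => (hN n hn).le⟩

/-- Proposition 1: `P(S_n^{δ₀,ε,n}/√n ≤ 0) ≤ ε + κ` for suitable `δ₀` and all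
large `n`. -/
theorem controlled_walk_ruin
    (β : ℝ) (hβ : β ∈ Set.Ioo (0 : ℝ) 1)
    (μ0 μ1 : Measure ℝ)
    (h0 : IsProbabilityMeasure μ0) (h1 : IsProbabilityMeasure μ1)
    (hb0 : ∃ K : ℝ, ∀ᵐ z ∂μ0, |z| ≤ K) (hb1 : ∃ K : ℝ, ∀ᵐ z ∂μ1, |z| ≤ K)
    (hm0 : ∫ z, z ∂μ0 = 0) (hm1 : ∫ z, z ∂μ1 = 0)
    (hv0 : ∫ z, z ^ 2 ∂μ0 = β ^ 2) (hv1 : ∫ z, z ^ 2 ∂μ1 = 1)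
    (ε : ℝ) (hε : ε ∈ Set.Ioo (0 : ℝ) 1) :
    ∀ κ : ℝ, 0 < κ → ∃ δ₀ : ℝ, δ₀ ∈ Set.Ioo (0 : ℝ) 1 ∧ ∃ n₀ : ℕ, 0 < n₀ ∧
      ∀ n : ℕ, n₀ ≤ n →
        (walkLaw μ0 μ1 β δ₀ ε n n (Set.Iic 0)).toReal ≤ ε + κ := by
  intro κ hκ
  obtain ⟨K₀, hK₀⟩ := hb0
  obtain ⟨K₁, hK₁⟩ := hb1
  set K : ℝ := max 0 (max K₀ K₁)
  have hK : 0 ≤ K := le_max_left _ _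
  have hs₀ : IsCentredStep K (β ^ 2) μ0 := ⟨h0, hK₀.mono fun z hz =>
    hz.trans ((le_max_left _ _).trans (le_max_right _ _)), hm0, hv0⟩
  have hs₁ : IsCentredStep K 1 μ1 := ⟨h1, hK₁.mono fun z hz =>
    hz.trans ((le_max_right _ _).trans (le_max_right _ _)), hm1, hv1⟩
  have hβ0 : 0 < β := hβ.1
  set γ : ℝ := β ^ 2 / 2 with hγ
  have hγ0 : 0 < γ := by positivity
  set τ : ℝ := min 1 (κ / 8)
  have hτ : 0 < τ := lt_min one_pos (by positivity)
  have hτ1 : τ ≤ 1 := min_le_left _ _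
  have hτκ : τ ≤ κ / 8 := min_le_right _ _
  obtain ⟨R, hR0, hR⟩ := exists_gcdf_ge hτ
  obtain ⟨η, hη0, hη1, hηu, hηe⟩ := exists_small_time R hβ hε hγ0 hτ
  set c : ℝ := Real.exp (R ^ 2 / 2 + γ * Real.log η)
  have hc0 : 0 ≤ c := (Real.exp_pos _).le
  obtain ⟨C, hC, hu⟩ := exists_isTestFunction_oscProb hβ0 hη0
  obtain ⟨D, hD, hf⟩ := exists_isTestFunction_gmon hη0 γ
  set δ : ℝ := min (1 / 2) (τ / (C + 1))
  have hδ : 0 < δ := lt_min (by norm_num) (by positivity)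
  have hCδ : C * δ ≤ τ := by
    calc C * δ ≤ C * (τ / (C + 1)) := by
          gcongr
          exact min_le_right _ _
      _ ≤ τ := by
          rw [mul_div_assoc', div_le_iff₀ (by positivity)]
          nlinarith
  obtain ⟨N₁, hN₁⟩ := exists_div_sqrt_le (C * (1 + K ^ 3)) hτ
  obtain ⟨N₂, hN₂⟩ := exists_div_sqrt_le (D * (1 + K ^ 3)) hτ
  refine ⟨δ, ⟨hδ, (min_le_left _ _).trans_lt (by norm_num)⟩, max 1 (max N₁ N₂), by positivity,
    fun n hn => ?_⟩
  have hn0 : 0 < n := lt_of_lt_of_le one_pos ((le_max_left _ _).trans hn)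
  have hn1 := hN₁ n ((le_max_left _ _).trans ((le_max_right _ _).trans hn))
  have hn2 := hN₂ n ((le_max_right _ _).trans ((le_max_right _ _).trans hn))
  have hηm : η ∈ Icc η 2 := ⟨le_rfl, by linarith⟩
  have hIu := (hu.lintegral_walkLaw_le (ε := ε) hC (by positivity : 0 ≤ C * δ) hK hη1 hβ hδ hn0
    hs₀ hs₁ fun t ht x v hv hv1 hneg hpos =>
      oscProb_supersolution hβ hδ hC (hu.lipschitz_space t ht) hv hv1 hneg hpos).trans
    (ENNReal.ofReal_le_ofReal (by linarith : _ ≤ ε + 3 * τ))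
  have hIf := (hf.lintegral_walkLaw_le (ε := ε) hD le_rfl hK hη1 hβ hδ hn0
    hs₀ hs₁ fun t ht x v hv hv1 _ _ => gmon_supersolution hv hv1 x).trans
    (ENNReal.ofReal_le_ofReal (by
      linarith [gmon_zero_le_one hγ0.le one_half_pos.le (by linarith : 1 ≤ 1 + η) (sEps β ε)] :
        _ ≤ (2 : ℝ)))
  have hmu : Continuous (oscProb β η) :=
    continuous_iff_continuousAt.2 fun x => (hu.deriv_space η hηm x).continuousAt
  have hmf : Continuous (gmon 0 γ (1 / 2) η) :=
    continuous_iff_continuousAt.2 fun x => (hf.deriv_space η hηm x).continuousAt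
  have hpt : ∀ s : ℝ, (Iic (0 : ℝ)).indicator 1 s ≤ ENNReal.ofReal (oscProb β η (s / √n))
      + ENNReal.ofReal c * ENNReal.ofReal (gmon 0 γ (1 / 2) η (s / √n))
      + ENNReal.ofReal (2 * τ) := by
    intro s
    have hu0 := hu.nonneg η hηm (s / √n)
    have hf0 := hf.nonneg η hηm (s / √n)
    rw [← ENNReal.ofReal_mul hc0, ← ENNReal.ofReal_add hu0 (by positivity),
      ← ENNReal.ofReal_add (by positivity) (by positivity)]
    by_cases hs : s ∈ Iic (0 : ℝ)
    swap
    · rw [indicator_of_notMem hs]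
      exact zero_le
    rw [indicator_of_mem hs, Pi.one_apply, ← ENNReal.ofReal_one]
    apply ENNReal.ofReal_le_ofReal
    have hx0 : s / √n ≤ 0 := div_nonpos_of_nonpos_of_nonneg hs (Real.sqrt_nonneg _)
    rcases le_total (s / √n * Real.exp (-(Real.log η / 2))) (-R) with h | h
    · have := one_sub_le_oscProb hβ0 hR hR0 hτ.le h
      have : 0 ≤ c * gmon 0 γ (1 / 2) η (s / √n) := by positivity
      linarith
    · have := one_le_exp_mul_gmon (γ := γ) hη0 hR0 hx0 h
      linarith
  refine ENNReal.toReal_le_of_le_ofReal (by linarith [hε.1]) ?_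
  calc walkLaw μ0 μ1 β δ ε n n (Iic 0)
      = ∫⁻ s, (Iic (0 : ℝ)).indicator 1 s ∂walkLaw μ0 μ1 β δ ε n n :=
        (lintegral_indicator_one measurableSet_Iic).symm
    _ ≤ ∫⁻ s, (ENNReal.ofReal (oscProb β η (s / √n))
          + ENNReal.ofReal c * ENNReal.ofReal (gmon 0 γ (1 / 2) η (s / √n))
          + ENNReal.ofReal (2 * τ)) ∂walkLaw μ0 μ1 β δ ε n n := lintegral_mono hpt
    _ = ∫⁻ s, ENNReal.ofReal (oscProb β η (s / √n)) ∂walkLaw μ0 μ1 β δ ε n n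
          + ENNReal.ofReal c *
            ∫⁻ s, ENNReal.ofReal (gmon 0 γ (1 / 2) η (s / √n)) ∂walkLaw μ0 μ1 β δ ε n n
          + ENNReal.ofReal (2 * τ) := by
        rw [lintegral_add_right _ measurable_const, lintegral_add_left (by fun_prop),
          lintegral_const_mul _ (by fun_prop), lintegral_const,
          walkLaw_univ hβ hδ hn0 hs₀ hs₁, mul_one]
    _ ≤ ENNReal.ofReal (ε + 3 * τ) + ENNReal.ofReal τ * ENNReal.ofReal 2
          + ENNReal.ofReal (2 * τ) := by
        gcongr
    _ ≤ ENNReal.ofReal (ε + κ) := by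
        have := hε.1
        rw [← ENNReal.ofReal_mul hτ.le, ← ENNReal.ofReal_add (by positivity) (by positivity),
          ← ENNReal.ofReal_add (by positivity) (by positivity)]
        exact ENNReal.ofReal_le_ofReal (by linarith)

end Paper
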